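/- arXiv:math/0006147 — 6 statements merged into one kernel-verified Lean document; each statement's English description precedes it below -/
import Mathlib

section
/- Let U ⊆ ℂ be open and let f : U → ℂ be smooth with nowhere-vanishing Wirtinger derivative ∂f. Set μ = ∂̄f/∂f (the Beltrami coefficient of f). Then the Schwarzian derivative {f,z} satisfies ∂̄{f,z} − μ·∂{f,z} − 2·(∂μ)·{f,z} = ∂³μ on U; that is, ∂̄_μ^{(2)}{f,z} = ∂³μ. -/
/-!
Write `a = ∂f` and let `r = ∂a / a` be the logarithmic derivative of `a`. Differentiating
`∂a = r a` gives `∂²a = (∂r + r²) a`, so the Schwarzian is `{f,z} = ∂r - r² / 2`.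

Since `∂` and `∂̄` commute on smooth functions (symmetry of the second real derivative, lemma
`wdbar_wd`), applying `∂` to the Beltrami equation `∂̄f = μ a` gives `∂̄a = ∂μ a + μ ∂a`. Applying `∂`
again and dividing by `a` gives `∂̄r = ∂²μ + ∂μ r + μ ∂r`, and one more `∂` gives
`∂̄∂r = ∂³μ + ∂²μ r + 2 ∂μ ∂r + μ ∂²r`. Substituting these into `∂̄(∂r - r² / 2)`, everything except
`∂³μ` cancels against `μ ∂{f,z} + 2 ∂μ {f,z}`.
-/

/-- The Wirtinger derivative ∂u = (u_x − i·u_y)/2 of a function `u : ℂ → ℂ`. -/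
noncomputable def wd (u : ℂ → ℂ) : ℂ → ℂ :=
  fun z => (fderiv ℝ u z 1 - Complex.I * fderiv ℝ u z Complex.I) / 2

/-- The conjugate Wirtinger derivative ∂̄u = (u_x + i·u_y)/2. -/
noncomputable def wdbar (u : ℂ → ℂ) : ℂ → ℂ :=
  fun z => (fderiv ℝ u z 1 + Complex.I * fderiv ℝ u z Complex.I) / 2

/-- The Schwarzian derivative {f,z} = ∂³f/∂f − (3/2)·(∂²f/∂f)² of a smooth map. -/
noncomputable def schwarz (f : ℂ → ℂ) : ℂ → ℂ :=
  fun z => wd (wd (wd f)) z / wd f z - (3/2) * (wd (wd f) z / wd f z)^2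

/-- The operator ∂̄_μ^{(k)} u = ∂̄u − μ·∂u − k·(∂μ)·u. -/
noncomputable def dbarMu (μ : ℂ → ℂ) (k : ℤ) (u : ℂ → ℂ) : ℂ → ℂ :=
  fun z => wdbar u z - μ z * wd u z - (k : ℂ) * wd μ z * u z

open Set Filter Topology

section Wirtinger

variable {U : Set ℂ} {u v : ℂ → ℂ} {z : ℂ}

lemma wd_congr (hU : IsOpen U) (h : EqOn u v U) : EqOn (wd u) (wd v) U := by
  intro z hz
  have : u =ᶠ[𝓝 z] v := h.eventuallyEq_of_mem (hU.mem_nhds hz)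
  simp only [wd, this.fderiv_eq]

lemma wdbar_congr (hU : IsOpen U) (h : EqOn u v U) : EqOn (wdbar u) (wdbar v) U := by
  intro z hz
  have : u =ᶠ[𝓝 z] v := h.eventuallyEq_of_mem (hU.mem_nhds hz)
  simp only [wdbar, this.fderiv_eq]

lemma diffAt_of_smooth (hU : IsOpen U) (hu : ContDiffOn ℝ (⊤ : ℕ∞) u U) (hz : z ∈ U) :
    DifferentiableAt ℝ u z :=
  (hu.contDiffAt (hU.mem_nhds hz)).differentiableAt (by simp)

lemma smooth_fderiv (hU : IsOpen U) (hu : ContDiffOn ℝ (⊤ : ℕ∞) u U) :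
    ContDiffOn ℝ (⊤ : ℕ∞) (fderiv ℝ u) U :=
  hu.fderiv_of_isOpen hU (by simp)

lemma smooth_fderiv_apply (hU : IsOpen U) (hu : ContDiffOn ℝ (⊤ : ℕ∞) u U) (w : ℂ) :
    ContDiffOn ℝ (⊤ : ℕ∞) (fun z => fderiv ℝ u z w) U :=
  (smooth_fderiv hU hu).clm_apply contDiffOn_const

lemma smooth_wd (hU : IsOpen U) (hu : ContDiffOn ℝ (⊤ : ℕ∞) u U) :
    ContDiffOn ℝ (⊤ : ℕ∞) (wd u) U :=
  ((smooth_fderiv_apply hU hu 1).sub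
    (contDiffOn_const.mul (smooth_fderiv_apply hU hu Complex.I))).div_const 2

lemma smooth_wdbar (hU : IsOpen U) (hu : ContDiffOn ℝ (⊤ : ℕ∞) u U) :
    ContDiffOn ℝ (⊤ : ℕ∞) (wdbar u) U :=
  ((smooth_fderiv_apply hU hu 1).add
    (contDiffOn_const.mul (smooth_fderiv_apply hU hu Complex.I))).div_const 2

lemma smooth_div (hu : ContDiffOn ℝ (⊤ : ℕ∞) u U) (hv : ContDiffOn ℝ (⊤ : ℕ∞) v U)
    (h0 : ∀ z ∈ U, v z ≠ 0) : ContDiffOn ℝ (⊤ : ℕ∞) (fun w => u w / v w) U := by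
  simp only [div_eq_mul_inv]
  exact hu.mul (hv.inv h0)

lemma wd_add (hu : DifferentiableAt ℝ u z) (hv : DifferentiableAt ℝ v z) :
    wd (fun w => u w + v w) z = wd u z + wd v z := by
  simp only [wd, fderiv_fun_add hu hv, add_apply]
  ring

lemma wd_mul (hu : DifferentiableAt ℝ u z) (hv : DifferentiableAt ℝ v z) :
    wd (fun w => u w * v w) z = wd u z * v z + u z * wd v z := by
  simp only [wd, fderiv_fun_mul hu hv, add_apply,
    smul_apply, smul_eq_mul]
  ring

lemma wdbar_mul (hu : DifferentiableAt ℝ u z) (hv : DifferentiableAt ℝ v z) :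
    wdbar (fun w => u w * v w) z = wdbar u z * v z + u z * wdbar v z := by
  simp only [wdbar, fderiv_fun_mul hu hv, add_apply,
    smul_apply, smul_eq_mul]
  ring

lemma wd_sub_half_sq (hu : DifferentiableAt ℝ u z) (hv : DifferentiableAt ℝ v z) :
    wd (fun w => u w - v w * v w / 2) z = wd u z - v z * wd v z := by
  have h : HasFDerivAt (fun w => u w - v w * v w / 2) _ z :=
    hu.hasFDerivAt.sub ((hv.hasFDerivAt.mul hv.hasFDerivAt).mul_const (2⁻¹ : ℂ))
  simp only [wd, h.fderiv, add_apply, sub_apply,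
    smul_apply, smul_eq_mul]
  ring

lemma wdbar_sub_half_sq (hu : DifferentiableAt ℝ u z) (hv : DifferentiableAt ℝ v z) :
    wdbar (fun w => u w - v w * v w / 2) z = wdbar u z - v z * wdbar v z := by
  have h : HasFDerivAt (fun w => u w - v w * v w / 2) _ z :=
    hu.hasFDerivAt.sub ((hv.hasFDerivAt.mul hv.hasFDerivAt).mul_const (2⁻¹ : ℂ))
  simp only [wdbar, h.fderiv, add_apply, sub_apply,
    smul_apply, smul_eq_mul]
  ring

/-- The two Wirtinger derivatives commute, by symmetry of the second real derivative. -/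
lemma wdbar_wd (hU : IsOpen U) (hu : ContDiffOn ℝ (⊤ : ℕ∞) u U) (hz : z ∈ U) :
    wdbar (wd u) z = wd (wdbar u) z := by
  have hd : DifferentiableAt ℝ (fderiv ℝ u) z :=
    ((smooth_fderiv hU hu).contDiffAt (hU.mem_nhds hz)).differentiableAt (by simp)
  have happ (w : ℂ) : HasFDerivAt (fun z => fderiv ℝ u z w)
      ((fderiv ℝ (fderiv ℝ u) z).flip w) z := by
    simpa using hd.hasFDerivAt.clm_apply (hasFDerivAt_const w z)
  have hsymm : fderiv ℝ (fderiv ℝ u) z 1 Complex.I = fderiv ℝ (fderiv ℝ u) z Complex.I 1 :=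
    ((hu.contDiffAt (hU.mem_nhds hz)).isSymmSndFDerivAt
      (by simpa using (WithTop.coe_le_coe.2 le_top : ((2 : ℕ∞) : WithTop ℕ∞) ≤ (⊤ : ℕ∞)))).eq 1 Complex.I
  have h1 : HasFDerivAt (wd u) _ z :=
    ((happ 1).sub ((happ Complex.I).const_mul Complex.I)).mul_const (2⁻¹ : ℂ)
  have h2 : HasFDerivAt (wdbar u) _ z :=
    ((happ 1).add ((happ Complex.I).const_mul Complex.I)).mul_const (2⁻¹ : ℂ)
  rw [wdbar, wd, h1.fderiv, h2.fderiv]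
  simp only [add_apply, sub_apply,
    smul_apply, smul_eq_mul, ContinuousLinearMap.flip_apply, hsymm]
  ring

/-- If `∂̄u = p q + s t`, then `∂̄∂u` is obtained by applying the Leibniz rule to `p q + s t`. -/
lemma wdbar_wd_of_eqOn {p q s t : ℂ → ℂ} (hU : IsOpen U) (hu : ContDiffOn ℝ (⊤ : ℕ∞) u U)
    (hp : ContDiffOn ℝ (⊤ : ℕ∞) p U) (hq : ContDiffOn ℝ (⊤ : ℕ∞) q U)
    (hs : ContDiffOn ℝ (⊤ : ℕ∞) s U) (ht : ContDiffOn ℝ (⊤ : ℕ∞) t U)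
    (h : EqOn (wdbar u) (fun w => p w * q w + s w * t w) U) (hz : z ∈ U) :
    wdbar (wd u) z = wd p z * q z + p z * wd q z + (wd s z * t z + s z * wd t z) := by
  have dp := diffAt_of_smooth hU hp hz
  have dq := diffAt_of_smooth hU hq hz
  have ds := diffAt_of_smooth hU hs hz
  have dt := diffAt_of_smooth hU ht hz
  rw [wdbar_wd hU hu hz, wd_congr hU h hz, wd_add (dp.fun_mul dq) (ds.fun_mul dt), wd_mul dp dq,
    wd_mul ds dt]

/-- The identity for an arbitrary solution `μ` of the Beltrami equation `∂̄f = μ ∂f` and an arbitrary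
`r` with `∂²f = r ∂f`, which keeps quotients out of the computation. -/
lemma dbarMu_schwarz {f μ r : ℂ → ℂ} (hU : IsOpen U) (hf : ContDiffOn ℝ (⊤ : ℕ∞) f U)
    (hf' : ∀ z ∈ U, wd f z ≠ 0) (hμ : ContDiffOn ℝ (⊤ : ℕ∞) μ U)
    (hr : ContDiffOn ℝ (⊤ : ℕ∞) r U) (eμ : EqOn (wdbar f) (fun w => μ w * wd f w) U)
    (er : EqOn (wd (wd f)) (fun w => r w * wd f w) U) (hz : z ∈ U) :
    dbarMu μ 2 (schwarz f) z = wd (wd (wd μ)) z := by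
  have ha := smooth_wd hU hf
  have hb := smooth_wd hU ha
  have hμ₁ := smooth_wd hU hμ
  have hμ₂ := smooth_wd hU hμ₁
  have hr₁ := smooth_wd hU hr
  have d {u : ℂ → ℂ} (hu : ContDiffOn ℝ (⊤ : ℕ∞) u U) {w : ℂ} (hw : w ∈ U) :=
    diffAt_of_smooth hU hu hw
  have hS : EqOn (schwarz f) (fun w => wd r w - r w * r w / 2) U := by
    intro w hw
    have hc : wd (wd (wd f)) w = wd r w * wd f w + r w * wd (wd f) w := by
      rw [wd_congr hU er hw, wd_mul (d hr hw) (d ha hw)]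
    have hne := hf' w hw
    have hb' : wd (wd f) w = r w * wd f w := er hw
    simp only [schwarz, hc, hb']
    field_simp
    ring
  have h_a : EqOn (wdbar (wd f)) (fun w => wd μ w * wd f w + μ w * wd (wd f) w) U := by
    intro w hw
    rw [wdbar_wd hU hf hw, wd_congr hU eμ hw, wd_mul (d hμ hw) (d ha hw)]
  have h_r : EqOn (wdbar r)
      (fun w => wd (wd μ) w + (wd μ w * r w + μ w * wd r w)) U := by
    intro w hw
    have h1 := wdbar_wd_of_eqOn hU ha hμ₁ ha hμ hb h_a hw
    have h2 : wdbar (wd (wd f)) w = wdbar r w * wd f w + r w * wdbar (wd f) w := by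
      rw [wdbar_congr hU er hw, wdbar_mul (d hr hw) (d ha hw)]
    have hc : wd (wd (wd f)) w = wd r w * wd f w + r w * wd (wd f) w := by
      rw [wd_congr hU er hw, wd_mul (d hr hw) (d ha hw)]
    have h3 : wdbar (wd f) w = wd μ w * wd f w + μ w * wd (wd f) w := h_a hw
    have hb' : wd (wd f) w = r w * wd f w := er hw
    rw [h1, h3, hc, hb'] at h2
    apply mul_right_cancel₀ (hf' w hw)
    linear_combination -h2
  have h_r₁ : wdbar (wd r) z = wd (wd (wd μ)) z
      + (wd (wd μ) z * r z + wd μ z * wd r z + (wd μ z * wd r z + μ z * wd (wd r) z)) := by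
    rw [wdbar_wd hU hr hz, wd_congr hU h_r hz,
      wd_add (d hμ₂ hz) (((d hμ₁ hz).fun_mul (d hr hz)).fun_add ((d hμ hz).fun_mul (d hr₁ hz))),
      wd_add ((d hμ₁ hz).fun_mul (d hr hz)) ((d hμ hz).fun_mul (d hr₁ hz)),
      wd_mul (d hμ₁ hz) (d hr hz), wd_mul (d hμ hz) (d hr₁ hz)]
  have h_r₀ : wdbar r z = wd (wd μ) z + (wd μ z * r z + μ z * wd r z) := h_r hz
  rw [dbarMu, wdbar_congr hU hS hz, wd_congr hU hS hz, hS hz,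
    wdbar_sub_half_sq (d hr₁ hz) (d hr hz), wd_sub_half_sq (d hr₁ hz) (d hr hz), h_r₁, h_r₀]
  push_cast
  ring

end Wirtinger

/-- for smooth `f` with nowhere-vanishing `∂f` on an open `U`, and
`μ = ∂̄f/∂f`, the Schwarzian derivative satisfies `∂̄_μ^{(2)} {f,z} = ∂³μ` on `U`. -/
theorem stmt0 (U : Set ℂ) (hU : IsOpen U) (f : ℂ → ℂ)
    (hf : ContDiffOn ℝ (⊤ : ℕ∞) f U) (hf' : ∀ z ∈ U, wd f z ≠ 0) :
    ∀ z ∈ U,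
      dbarMu (fun w => wdbar f w / wd f w) 2 (schwarz f) z
        = wd (wd (wd (fun w => wdbar f w / wd f w))) z := by
  intro z hz
  have ha := smooth_wd hU hf
  exact dbarMu_schwarz hU hf hf' (smooth_div (smooth_wdbar hU hf) ha hf')
    (smooth_div (smooth_wd hU ha) ha hf')
    (fun w hw => (div_mul_cancel₀ _ (hf' w hw)).symm)
    (fun w hw => (div_mul_cancel₀ _ (hf' w hw)).symm) hz
end

section
/- Let μ, h : ℂ → ℂ be smooth with D_h μ = ∂̄h on ℂ. For a smooth compactly supported u : ℂ → ℂ set c(u) = 2·∫_ℂ μ·D_h u dA, and for smooth compactly supported v, w set v·c(w) = 2·∫_ℂ (∂̄_μ^{(−1)}v · D_h w + μ·L_v(D_h w)) dA, where L_v q = v·∂q + 2·(∂v)·q. Then for all smooth compactly supported v, w : ℂ → ℂ one has the cocycle identity v·c(w) − w·c(v) − c(v·∂w − w·∂v) = 0. -/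
/-!
The cocycle integrand is, on shell, a divergence `∂A + ∂̄B` of smooth compactly supported
functions, so its integral vanishes (`integral_wd`, `integral_wdbar`). Write
`[v,w] = v·∂w − w·∂v`.

* The terms in `∂̄_μ^{(−1)}v` that involve `μ` combine with `μ·L_v(D_h w)` to
  `∂μ·v·D_h w + μ·∂v·D_h w + μ·v·∂(D_h w) = ∂(μ·v·D_h w)`, and likewise with `v`, `w` exchanged.
* What remains is `∂̄v·D_h w − ∂̄w·D_h v − μ·D_h[v,w]`. Modulo divergences, moving `∂̄` off `v` and
  using that `D_h` is formally skew-adjoint (`mul_Dop_add_mul_Dop`), the first two terms reduce to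
  `−v·[∂̄, D_h]w = −v·(2·∂̄h·∂w + ∂∂̄h·w)` (`wdbar_Dop`), hence to `−∂̄h·[v,w]`.
* Since `∂̄h = D_h μ`, skew-adjointness once more turns this into `μ·D_h[v,w]`, which cancels the
  last term.

Collecting the divergences gives explicit primitives; `integrand_eq` is the resulting pointwise
identity.
-/

open Complex MeasureTheory

/-- The Schwarzian derivative S(g) = g'''/g' − (3/2)·(g''/g')² of a holomorphic map. -/
noncomputable def schwarzD (g : ℂ → ℂ) : ℂ → ℂ :=
  fun z => deriv (deriv (deriv g)) z / deriv g z - (3/2) * (deriv (deriv g) z / deriv g z)^2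

/-- The third-order operator D_h u = ∂³u + 2h·∂u + (∂h)·u. -/
noncomputable def Dop (h u : ℂ → ℂ) : ℂ → ℂ :=
  fun z => wd (wd (wd u)) z + 2 * h z * wd u z + wd h z * u z

/-- The Lie derivative on weight-2 quantities: L_v q = v·∂q + 2·(∂v)·q. -/
noncomputable def lieD (v q : ℂ → ℂ) : ℂ → ℂ :=
  fun z => v z * wd q z + 2 * wd v z * q z

section Wirtinger

@[fun_prop]
lemma contDiff_wd {u : ℂ → ℂ} (hu : ContDiff ℝ (⊤ : ℕ∞) u) :
    ContDiff ℝ (⊤ : ℕ∞) (wd u) := by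
  have h : ContDiff ℝ (⊤ : ℕ∞) (fderiv ℝ u) := hu.fderiv_right (by simp)
  have h1 : ∀ c : ℂ, ContDiff ℝ (⊤ : ℕ∞) (fun z => fderiv ℝ u z c) :=
    fun c => h.clm_apply contDiff_const
  exact ((h1 1).sub (contDiff_const.mul (h1 I))).div_const 2

@[fun_prop]
lemma contDiff_wdbar {u : ℂ → ℂ} (hu : ContDiff ℝ (⊤ : ℕ∞) u) :
    ContDiff ℝ (⊤ : ℕ∞) (wdbar u) := by
  have h : ContDiff ℝ (⊤ : ℕ∞) (fderiv ℝ u) := hu.fderiv_right (by simp)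
  have h1 : ∀ c : ℂ, ContDiff ℝ (⊤ : ℕ∞) (fun z => fderiv ℝ u z c) :=
    fun c => h.clm_apply contDiff_const
  exact ((h1 1).add (contDiff_const.mul (h1 I))).div_const 2

lemma diffAt {u : ℂ → ℂ} (hu : ContDiff ℝ (⊤ : ℕ∞) u) (z : ℂ) : DifferentiableAt ℝ u z :=
  (hu.differentiable (by simp)) z

lemma wd_const (c : ℂ) : wd (fun _ => c) = fun _ => 0 := by
  funext z; simp [wd]

lemma wdbar_const (c : ℂ) : wdbar (fun _ => c) = fun _ => 0 := by
  funext z; simp [wdbar]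

variable {a b : ℂ → ℂ}

lemma wd_add_s6 (ha : ContDiff ℝ (⊤ : ℕ∞) a) (hb : ContDiff ℝ (⊤ : ℕ∞) b) :
    wd (fun z => a z + b z) = fun z => wd a z + wd b z := by
  funext z
  simp only [wd, fderiv_fun_add (diffAt ha z) (diffAt hb z), _root_.add_apply]
  ring

lemma wd_sub (ha : ContDiff ℝ (⊤ : ℕ∞) a) (hb : ContDiff ℝ (⊤ : ℕ∞) b) :
    wd (fun z => a z - b z) = fun z => wd a z - wd b z := by
  funext z
  simp only [wd, fderiv_fun_sub (diffAt ha z) (diffAt hb z), _root_.sub_apply]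
  ring

lemma wd_mul_s6 (ha : ContDiff ℝ (⊤ : ℕ∞) a) (hb : ContDiff ℝ (⊤ : ℕ∞) b) :
    wd (fun z => a z * b z) = fun z => wd a z * b z + a z * wd b z := by
  funext z
  simp only [wd, fderiv_fun_mul (diffAt ha z) (diffAt hb z), _root_.add_apply,
    _root_.smul_apply, smul_eq_mul]
  ring

lemma wdbar_add (ha : ContDiff ℝ (⊤ : ℕ∞) a) (hb : ContDiff ℝ (⊤ : ℕ∞) b) :
    wdbar (fun z => a z + b z) = fun z => wdbar a z + wdbar b z := by
  funext z
  simp only [wdbar, fderiv_fun_add (diffAt ha z) (diffAt hb z), _root_.add_apply]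
  ring

lemma wdbar_mul_s6 (ha : ContDiff ℝ (⊤ : ℕ∞) a) (hb : ContDiff ℝ (⊤ : ℕ∞) b) :
    wdbar (fun z => a z * b z) = fun z => wdbar a z * b z + a z * wdbar b z := by
  funext z
  simp only [wdbar, fderiv_fun_mul (diffAt ha z) (diffAt hb z), _root_.add_apply,
    _root_.smul_apply, smul_eq_mul]
  ring

/-- Symmetry of second derivatives in Wirtinger form: `∂̄∂ = ∂∂̄`. -/
lemma wdbar_wd_s6 (ha : ContDiff ℝ (⊤ : ℕ∞) a) : wdbar (wd a) = wd (wdbar a) := by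
  have h2 : ContDiff ℝ (⊤ : ℕ∞) (fderiv ℝ a) := ha.fderiv_right (by simp)
  funext z
  have hd : DifferentiableAt ℝ (fderiv ℝ a) z := (h2.differentiable (by simp)) z
  have hc : ∀ c : ℂ, DifferentiableAt ℝ (fun z => fderiv ℝ a z c) z :=
    fun c => hd.clm_apply (differentiableAt_const c)
  have hf : ∀ c : ℂ, ∀ d : ℂ, fderiv ℝ (fun z => fderiv ℝ a z c) z d
      = fderiv ℝ (fderiv ℝ a) z d c := by
    intro c d
    rw [fderiv_clm_apply hd (differentiableAt_const c)]
    simp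
  have hsymm : fderiv ℝ (fderiv ℝ a) z 1 I = fderiv ℝ (fderiv ℝ a) z I 1 :=
    (ha.contDiffAt.isSymmSndFDerivAt (by simpa using WithTop.coe_le_coe.2 (le_top : (2 : ℕ∞) ≤ ⊤))) 1 I
  have e1 : ∀ d, fderiv ℝ (wd a) z d = (fderiv ℝ (fderiv ℝ a) z d 1
      - I * fderiv ℝ (fderiv ℝ a) z d I) / 2 := by
    intro d
    unfold wd
    simp only [div_eq_mul_inv]
    rw [fderiv_mul_const ((hc 1).fun_sub ((hc I).const_mul I)),
      fderiv_fun_sub (hc 1) ((hc I).const_mul I), fderiv_const_mul (hc I)]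
    simp only [_root_.smul_apply, _root_.sub_apply, hf, smul_eq_mul]
    ring
  have e2 : ∀ d, fderiv ℝ (wdbar a) z d = (fderiv ℝ (fderiv ℝ a) z d 1
      + I * fderiv ℝ (fderiv ℝ a) z d I) / 2 := by
    intro d
    unfold wdbar
    simp only [div_eq_mul_inv]
    rw [fderiv_mul_const ((hc 1).fun_add ((hc I).const_mul I)),
      fderiv_fun_add (hc 1) ((hc I).const_mul I), fderiv_const_mul (hc I)]
    simp only [_root_.smul_apply, _root_.add_apply, hf, smul_eq_mul]
    ring
  rw [wdbar, wd]
  simp only [e1, e2, hsymm]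
  ring

end Wirtinger

lemma HasCompactSupport.wd {u : ℂ → ℂ} (hu : HasCompactSupport u) :
    HasCompactSupport (wd u) := by
  have h := hu.fderiv (𝕜 := ℝ)
  refine h.mono' (fun z hz => subset_closure ?_)
  contrapose! hz
  simp only [Function.mem_support, not_not] at hz ⊢
  simp [_root_.wd, hz]

lemma HasCompactSupport.wdbar {u : ℂ → ℂ} (hu : HasCompactSupport u) :
    HasCompactSupport (wdbar u) := by
  have h := hu.fderiv (𝕜 := ℝ)
  refine h.mono' (fun z hz => subset_closure ?_)
  contrapose! hz
  simp only [Function.mem_support, not_not] at hz ⊢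
  simp [_root_.wdbar, hz]

lemma integrable_of_smooth {u : ℂ → ℂ} (hu : ContDiff ℝ (⊤ : ℕ∞) u)
    (hc : HasCompactSupport u) : Integrable u :=
  hu.continuous.integrable_of_hasCompactSupport hc

lemma integrable_fderiv_apply {u : ℂ → ℂ} (hu : ContDiff ℝ (⊤ : ℕ∞) u)
    (hc : HasCompactSupport u) (d : ℂ) : Integrable (fun z => fderiv ℝ u z d) := by
  have h : ContDiff ℝ (⊤ : ℕ∞) (fderiv ℝ u) := hu.fderiv_right (by simp)
  exact (h.continuous.clm_apply continuous_const).integrable_of_hasCompactSupport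
    (hc.fderiv_apply (𝕜 := ℝ) d)

lemma integral_fderiv_apply {u : ℂ → ℂ} (hu : ContDiff ℝ (⊤ : ℕ∞) u)
    (hc : HasCompactSupport u) (d : ℂ) : ∫ z, fderiv ℝ u z d = 0 := by
  -- integration by parts against the constant function `1`
  have := integral_mul_fderiv_eq_neg_fderiv_mul_of_integrable (μ := (volume : Measure ℂ))
    (f := fun _ : ℂ => (1 : ℂ)) (g := u) (v := d)
    (by simp) (by simpa using integrable_fderiv_apply hu hc d)
    (by simpa using integrable_of_smooth hu hc)
    (fun _ _ => differentiableAt_const _) (fun z _ => diffAt hu z)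
  simpa using this

lemma integral_wd {u : ℂ → ℂ} (hu : ContDiff ℝ (⊤ : ℕ∞) u)
    (hc : HasCompactSupport u) : ∫ z, wd u z = 0 := by
  unfold wd
  rw [integral_div, integral_sub (integrable_fderiv_apply hu hc 1)
    ((integrable_fderiv_apply hu hc I).const_mul I), integral_const_mul,
    integral_fderiv_apply hu hc, integral_fderiv_apply hu hc]
  simp

lemma integral_wdbar {u : ℂ → ℂ} (hu : ContDiff ℝ (⊤ : ℕ∞) u)
    (hc : HasCompactSupport u) : ∫ z, wdbar u z = 0 := by
  unfold wdbar
  rw [integral_div, integral_add (integrable_fderiv_apply hu hc 1)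
    ((integrable_fderiv_apply hu hc I).const_mul I), integral_const_mul,
    integral_fderiv_apply hu hc, integral_fderiv_apply hu hc]
  simp

@[fun_prop]
lemma contDiff_Dop {h u : ℂ → ℂ} (hh : ContDiff ℝ (⊤ : ℕ∞) h) (hu : ContDiff ℝ (⊤ : ℕ∞) u) :
    ContDiff ℝ (⊤ : ℕ∞) (Dop h u) := by
  unfold Dop; fun_prop

lemma HasCompactSupport.Dop {h u : ℂ → ℂ} (hu : HasCompactSupport u) :
    HasCompactSupport (Dop h u) :=
  (hu.wd.wd.wd.add hu.wd.mul_left).add hu.mul_left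

/-- The bilinear concomitant of `D_h`, whose `∂`-derivative measures the failure of pointwise
skew-symmetry; see `mul_Dop_add_mul_Dop`. -/
noncomputable def concomitant (h a b : ℂ → ℂ) : ℂ → ℂ :=
  fun z => a z * wd (wd b) z + wd (wd a) z * b z - wd a z * wd b z + 2 * h z * (a z * b z)

@[fun_prop]
lemma contDiff_concomitant {h a b : ℂ → ℂ} (hh : ContDiff ℝ (⊤ : ℕ∞) h)
    (ha : ContDiff ℝ (⊤ : ℕ∞) a) (hb : ContDiff ℝ (⊤ : ℕ∞) b) :
    ContDiff ℝ (⊤ : ℕ∞) (concomitant h a b) := by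
  unfold concomitant; fun_prop

lemma HasCompactSupport.concomitant {h a b : ℂ → ℂ} (hb : HasCompactSupport b) :
    HasCompactSupport (concomitant h a b) :=
  ((hb.wd.wd.mul_left.add hb.mul_left).sub hb.wd.mul_left).add (hb.mul_left.mul_left)

/-- `D_h` is formally skew-adjoint: `a·D_h b + b·D_h a` is a total `∂`-derivative. -/
lemma mul_Dop_add_mul_Dop {h a b : ℂ → ℂ} (hh : ContDiff ℝ (⊤ : ℕ∞) h)
    (ha : ContDiff ℝ (⊤ : ℕ∞) a) (hb : ContDiff ℝ (⊤ : ℕ∞) b) (z : ℂ) :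
    a z * Dop h b z + b z * Dop h a z = wd (concomitant h a b) z := by
  unfold concomitant Dop
  simp (disch := fun_prop) only [wd_add_s6, wd_sub, wd_mul_s6, wd_const]
  ring

/-- The commutator `[∂̄, D_h]` is the first-order operator built from `∂̄h`. -/
lemma wdbar_Dop {h u : ℂ → ℂ} (hh : ContDiff ℝ (⊤ : ℕ∞) h)
    (hu : ContDiff ℝ (⊤ : ℕ∞) u) (z : ℂ) :
    wdbar (Dop h u) z
      = Dop h (wdbar u) z + 2 * wdbar h z * wd u z + wd (wdbar h) z * u z := by
  unfold Dop
  simp (disch := fun_prop) only [wdbar_add, wdbar_mul_s6, wdbar_const, wdbar_wd_s6]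
  ring

/-- The function `A` in the representation `∂A + ∂̄(v·D_h w)` of the cocycle integrand. -/
noncomputable def primitive (μ h v w : ℂ → ℂ) : ℂ → ℂ :=
  fun z => μ z * v z * Dop h w z - μ z * w z * Dop h v z - concomitant h v (wdbar w) z
    - wdbar h z * v z * w z - concomitant h μ (fun x => v x * wd w x - w x * wd v x) z

/-- On shell, the cocycle integrand is a divergence with explicit primitives. -/
lemma integrand_eq {μ h v w : ℂ → ℂ}
    (hμ : ContDiff ℝ (⊤ : ℕ∞) μ) (hh : ContDiff ℝ (⊤ : ℕ∞) h)
    (hEL : ∀ z : ℂ, Dop h μ z = wdbar h z)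
    (hv : ContDiff ℝ (⊤ : ℕ∞) v) (hw : ContDiff ℝ (⊤ : ℕ∞) w) (z : ℂ) :
    (dbarMu μ (-1) v z * Dop h w z + μ z * lieD v (Dop h w) z)
      - (dbarMu μ (-1) w z * Dop h v z + μ z * lieD w (Dop h v) z)
      - μ z * Dop h (fun x => v x * wd w x - w x * wd v x) z
    = wd (primitive μ h v w) z + wdbar (fun x => v x * Dop h w x) z := by
  have h1 := mul_Dop_add_mul_Dop hh hv (contDiff_wdbar hw) z
  have h2 := mul_Dop_add_mul_Dop (b := fun x => v x * wd w x - w x * wd v x) hh hμ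
    (by fun_prop) z
  have h3 := wdbar_Dop hh hw z
  rw [hEL] at h2
  unfold primitive
  simp (disch := fun_prop) only [wd_sub, wd_mul_s6, wdbar_mul_s6, ← h1, ← h2, h3, dbarMu, lieD]
  push_cast
  ring

/-- on shell (`D_h μ = ∂̄h`), the assignment
`c(u) = 2∫ μ·D_h u dA`, with infinitesimal action
`v·c(w) = 2∫ (∂̄_μ^{(−1)}v · D_h w + μ·L_v(D_h w)) dA`, satisfies the cocycle identity
`v·c(w) − w·c(v) − c([v,w]) = 0` for all smooth compactly supported `v, w`. -/
theorem stmt6 (μ h : ℂ → ℂ)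
    (hμ : ContDiff ℝ (⊤ : ℕ∞) μ) (hh : ContDiff ℝ (⊤ : ℕ∞) h)
    (hEL : ∀ z : ℂ, Dop h μ z = wdbar h z) :
    ∀ v w : ℂ → ℂ, ContDiff ℝ (⊤ : ℕ∞) v → HasCompactSupport v →
      ContDiff ℝ (⊤ : ℕ∞) w → HasCompactSupport w →
      (2 * ∫ z : ℂ, (dbarMu μ (-1) v z * Dop h w z + μ z * lieD v (Dop h w) z))
        - (2 * ∫ z : ℂ, (dbarMu μ (-1) w z * Dop h v z + μ z * lieD w (Dop h v) z))
        - (2 * ∫ z : ℂ, μ z * Dop h (fun x => v x * wd w x - w x * wd v x) z) = 0 := by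
  intro v w hv cv hw cw
  have sbr : ContDiff ℝ (⊤ : ℕ∞) (fun x => v x * wd w x - w x * wd v x) := by fun_prop
  have cbr : HasCompactSupport (fun x => v x * wd w x - w x * wd v x) :=
    cw.wd.mul_left.sub cv.wd.mul_left
  have sterm : ∀ a b : ℂ → ℂ, ContDiff ℝ (⊤ : ℕ∞) a → ContDiff ℝ (⊤ : ℕ∞) b →
      HasCompactSupport b →
      Integrable (fun z => dbarMu μ (-1) a z * Dop h b z + μ z * lieD a (Dop h b) z) := by
    intro a b ha hb cb
    refine integrable_of_smooth (by unfold dbarMu lieD; fun_prop) ?_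
    exact cb.Dop.mul_left.add (cb.Dop.wd.mul_left.add cb.Dop.mul_left).mul_left
  have i3 : Integrable (fun z => μ z * Dop h (fun x => v x * wd w x - w x * wd v x) z) :=
    integrable_of_smooth (by fun_prop) cbr.Dop.mul_left
  have sP : ContDiff ℝ (⊤ : ℕ∞) (primitive μ h v w) := by unfold primitive; fun_prop
  have cP : HasCompactSupport (primitive μ h v w) :=
    (((cw.Dop.mul_left.sub cv.Dop.mul_left).sub cw.wdbar.concomitant).sub cw.mul_left).sub
      cbr.concomitant
  have sQ : ContDiff ℝ (⊤ : ℕ∞) (fun x => v x * Dop h w x) := by fun_prop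
  have cQ : HasCompactSupport (fun x => v x * Dop h w x) := cw.Dop.mul_left
  have i12 := (sterm v w hv hw cw).sub (sterm w v hw hv cv)
  simp only [Pi.sub_def] at i12
  rw [← mul_sub, ← integral_sub (sterm v w hv hw cw) (sterm w v hw hv cv), ← mul_sub,
    ← integral_sub i12 i3]
  simp only [integrand_eq hμ hh hEL hv hw]
  rw [integral_add (integrable_of_smooth (by fun_prop) cP.wd)
    (integrable_of_smooth (by fun_prop) cQ.wdbar), integral_wd sP cP, integral_wdbar sQ cQ]
  simp
end

section
/- Let U, U' ⊆ ℂ be open and let g : U → U' be holomorphic with nowhere-vanishing derivative g'. Let h, μ : U' → ℂ be smooth and define on U the quantities h̃ = (h∘g)·(g')² + S(g) and μ̃ = (μ∘g)·conj(g')/g', where S(g) = g'''/g' − (3/2)·(g''/g')². Then ∂̄h̃ − D_{h̃} μ̃ = ((∂̄h − D_h μ)∘g)·(g')²·conj(g') on U. In particular, the Euler–Lagrange density ∂̄h − D_h μ transforms as a tensor of weight (2,1) under holomorphic coordinate changes. -/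
/-!
The holomorphic chain rule gives `∂(f ∘ g) = (∂f ∘ g) g'` and `∂̄(f ∘ g) = (∂̄f ∘ g) conj g'`.
Holomorphic functions are killed by `∂̄`, and antiholomorphic ones such as `conj g'` by `∂`.
Hence `∂̄h̃ = (∂̄h ∘ g) g'² conj g'`, because the Schwarzian is holomorphic, and every `∂ᵏμ̃` is
`conj g'` times the formal `k`-th derivative of `(μ ∘ g) / g'`. What remains is the classical
fact that `∂³ + 2h∂ + ∂h` maps weight `-1` to weight `2` when `h` transforms with the Schwarzian
cocycle, a rational identity in the jets of `g`, `h` and `μ` at a point.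

The predicate `HasWirtinger` packages both Wirtinger derivatives together with real
differentiability, so that the Leibniz and chain rules can be applied without side conditions.
-/

open Complex MeasureTheory

/-- `HasWirtinger u a b z` says that `u` is real differentiable at `z` with differential
`a dz + b dz̄`, so that `∂u = a` and `∂̄u = b` there. -/
def HasWirtinger (u : ℂ → ℂ) (a b z : ℂ) : Prop :=
  HasFDerivAt u (a • (1 : ℂ →L[ℝ] ℂ) + b • (Complex.conjCLE : ℂ →L[ℝ] ℂ)) z

namespace HasWirtinger

variable {u v : ℂ → ℂ} {a b c d z : ℂ}

theorem wd_eq (hu : HasWirtinger u a b z) : wd u z = a := by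
  unfold HasWirtinger at hu
  simp only [wd, hu.fderiv]
  simp
  linear_combination (b / 2 - a / 2) * Complex.I_mul_I

theorem wdbar_eq (hu : HasWirtinger u a b z) : wdbar u z = b := by
  unfold HasWirtinger at hu
  simp only [wdbar, hu.fderiv]
  simp
  linear_combination (a / 2 - b / 2) * Complex.I_mul_I

theorem of_differentiableAt (hu : DifferentiableAt ℝ u z) :
    HasWirtinger u (wd u z) (wdbar u z) z := by
  refine hu.hasFDerivAt.congr_fderiv ?_
  ext w
  have hw : w = w.re • (1 : ℂ) + w.im • Complex.I := by simp
  conv_lhs => rw [hw, map_add, map_smul, map_smul]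
  conv_rhs => rw [hw, map_add, map_smul, map_smul]
  simp [wd, wdbar]
  linear_combination (w.im * fderiv ℝ u z Complex.I) * Complex.I_mul_I

theorem of_hasDerivAt (hu : HasDerivAt u a z) : HasWirtinger u a 0 z := by
  refine (hu.hasFDerivAt.restrictScalars ℝ).congr_fderiv ?_
  ext w
  simp [mul_comm]

theorem conj (hu : HasWirtinger u a b z) :
    HasWirtinger (fun x => (starRingEnd ℂ) (u x)) ((starRingEnd ℂ) b) ((starRingEnd ℂ) a) z := by
  refine ((Complex.conjCLE : ℂ →L[ℝ] ℂ).hasFDerivAt.comp z hu).congr_fderiv ?_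
  ext w
  simp [add_comm]

theorem add (hu : HasWirtinger u a b z) (hv : HasWirtinger v c d z) :
    HasWirtinger (fun x => u x + v x) (a + c) (b + d) z := by
  refine (HasFDerivAt.fun_add hu hv).congr_fderiv ?_
  ext w
  simp
  ring

theorem mul (hu : HasWirtinger u a b z) (hv : HasWirtinger v c d z) :
    HasWirtinger (fun x => u x * v x) (a * v z + u z * c) (b * v z + u z * d) z := by
  refine (HasFDerivAt.fun_mul hu hv).congr_fderiv ?_
  ext w
  simp
  ring

/-- Chain rule with a holomorphic inner function: `∂(u ∘ g) = (∂u ∘ g) g'` and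
`∂̄(u ∘ g) = (∂̄u ∘ g) conj g'`. -/
theorem comp_hasDerivAt {g : ℂ → ℂ} (hu : HasWirtinger u a b (g z)) (hg : HasDerivAt g c z) :
    HasWirtinger (fun x => u (g x)) (a * c) (b * (starRingEnd ℂ) c) z := by
  refine (HasFDerivAt.comp z hu (hg.hasFDerivAt.restrictScalars ℝ)).congr_fderiv ?_
  ext w
  simp
  ring

end HasWirtinger

/-- `∂u` on an open set depends only on `u` on that set. -/
theorem wd_eqOn_of_eqOn {U : Set ℂ} (hU : IsOpen U) {u v : ℂ → ℂ} (huv : Set.EqOn u v U) :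
    Set.EqOn (wd u) (wd v) U := fun z hz => by
  have he : u =ᶠ[nhds z] v := Filter.eventuallyEq_of_mem (hU.mem_nhds hz) huv
  simp only [wd, he.fderiv_eq]

theorem contDiffOn_wd {U : Set ℂ} (hU : IsOpen U) {u : ℂ → ℂ}
    (hu : ContDiffOn ℝ (⊤ : ℕ∞) u U) : ContDiffOn ℝ (⊤ : ℕ∞) (wd u) U := by
  have hf : ContDiffOn ℝ (⊤ : ℕ∞) (fderiv ℝ u) U := hu.fderiv_of_isOpen hU (by simp)
  unfold wd
  exact ((hf.clm_apply contDiffOn_const).sub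
    (contDiffOn_const.mul (hf.clm_apply contDiffOn_const))).div_const 2

theorem hasWirtinger_of_contDiffOn {U : Set ℂ} (hU : IsOpen U) {u : ℂ → ℂ}
    (hu : ContDiffOn ℝ (⊤ : ℕ∞) u U) {z : ℂ} (hz : z ∈ U) :
    HasWirtinger u (wd u z) (wdbar u z) z :=
  .of_differentiableAt ((hu.contDiffAt (hU.mem_nhds hz)).differentiableAt (by simp))

/-- the Euler–Lagrange density `∂̄h − D_h μ` transforms as a tensor of
weight (2,1) under holomorphic changes of coordinates:
`∂̄h̃ − D_{h̃} μ̃ = ((∂̄h − D_h μ)∘g)·(g')²·conj(g')`. -/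
theorem stmt8 (U U' : Set ℂ) (hU : IsOpen U) (hU' : IsOpen U')
    (g : ℂ → ℂ) (hg : DifferentiableOn ℂ g U) (hmaps : Set.MapsTo g U U')
    (hg' : ∀ z ∈ U, deriv g z ≠ 0)
    (h μ : ℂ → ℂ) (hh : ContDiffOn ℝ (⊤ : ℕ∞) h U') (hμ : ContDiffOn ℝ (⊤ : ℕ∞) μ U') :
    ∀ z ∈ U,
      wdbar (fun x => h (g x) * (deriv g x)^2 + schwarzD g x) z
          - Dop (fun x => h (g x) * (deriv g x)^2 + schwarzD g x)
              (fun x => μ (g x) * (starRingEnd ℂ) (deriv g x) / deriv g x) z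
        = (wdbar h (g z) - Dop h μ (g z)) * (deriv g z)^2
            * (starRingEnd ℂ) (deriv g z) := by
  have hd0 : ∀ z ∈ U, HasDerivAt g (deriv g z) z := fun z hz =>
    (hg.differentiableAt (hU.mem_nhds hz)).hasDerivAt
  have hd1 : ∀ z ∈ U, HasDerivAt (deriv g) (deriv (deriv g) z) z := fun z hz =>
    ((hg.deriv hU).differentiableAt (hU.mem_nhds hz)).hasDerivAt
  have hd2 : ∀ z ∈ U, HasDerivAt (deriv (deriv g)) (deriv (deriv (deriv g)) z) z := fun z hz =>
    (((hg.deriv hU).deriv hU).differentiableAt (hU.mem_nhds hz)).hasDerivAt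
  have hd3 : ∀ z ∈ U, HasDerivAt (deriv (deriv (deriv g)))
      (deriv (deriv (deriv (deriv g))) z) z := fun z hz =>
    ((((hg.deriv hU).deriv hU).deriv hU).differentiableAt (hU.mem_nhds hz)).hasDerivAt
  have hμ1 := contDiffOn_wd hU' hμ
  have hμ2 := contDiffOn_wd hU' hμ1
  -- Pullbacks along `g` of smooth functions on `U'`.
  have hpull : ∀ f : ℂ → ℂ, ContDiffOn ℝ (⊤ : ℕ∞) f U' → ∀ z ∈ U,
      HasWirtinger (fun x => f (g x)) (wd f (g z) * deriv g z)
        (wdbar f (g z) * (starRingEnd ℂ) (deriv g z)) z := fun f hf z hz =>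
    (hasWirtinger_of_contDiffOn hU' hf (hmaps hz)).comp_hasDerivAt (hd0 z hz)
  have hc : ∀ z ∈ U, HasWirtinger (fun x => (starRingEnd ℂ) (deriv g x)) 0
      ((starRingEnd ℂ) (deriv (deriv g) z)) z := fun z hz => by
    simpa using (HasWirtinger.of_hasDerivAt (hd1 z hz)).conj
  generalize hp : deriv g = p at *
  generalize hp1 : deriv p = p1 at *
  generalize hp2 : deriv p1 = p2 at *
  generalize hp3 : deriv p2 = p3 at *
  -- The successive `∂`-derivatives of `μ̃`, in which the antiholomorphic factor is a constant.
  have E1 : Set.EqOn (wd (fun x => μ (g x) * (starRingEnd ℂ) (p x) / p x))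
      (fun x => (starRingEnd ℂ) (p x) *
        (wd μ (g x) + μ (g x) * (-(p1 x) / p x ^ 2))) U := fun z hz => by
    have hz0 := hg' z hz
    have H := ((hpull μ hμ z hz).mul (hc z hz)).mul
      (.of_hasDerivAt ((hd1 z hz).fun_inv hz0))
    simp only [div_eq_mul_inv] at H ⊢
    rw [H.wd_eq]
    field_simp
    ring
  have E2 : Set.EqOn (wd (wd (fun x => μ (g x) * (starRingEnd ℂ) (p x) / p x)))
      (fun x => (starRingEnd ℂ) (p x) *
        (wd (wd μ) (g x) * p x + (wd μ (g x) * (-(p1 x) / p x)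
          + μ (g x) * ((2 * p1 x ^ 2 - p2 x * p x) / p x ^ 3)))) U := fun z hz => by
    have hz0 := hg' z hz
    rw [wd_eqOn_of_eqOn hU E1 hz]
    have H := (hc z hz).mul ((hpull _ hμ1 z hz).add ((hpull μ hμ z hz).mul
      (.of_hasDerivAt ((hd2 z hz).fun_neg.fun_div ((hd1 z hz).fun_pow 2) (pow_ne_zero 2 hz0)))))
    rw [H.wd_eq]
    field_simp
    push_cast
    ring
  intro z hz
  have hz0 := hg' z hz
  have E3 := wd_eqOn_of_eqOn hU E2 hz
  have H3 := (hc z hz).mul (((hpull _ hμ2 z hz).mul (.of_hasDerivAt (hd1 z hz))).add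
    (((hpull _ hμ1 z hz).mul (.of_hasDerivAt ((hd2 z hz).fun_neg.fun_div (hd1 z hz) hz0))).add
    ((hpull μ hμ z hz).mul (.of_hasDerivAt
      (((((hd2 z hz).fun_pow 2).const_mul 2).fun_sub ((hd3 z hz).fun_mul (hd1 z hz))).fun_div
        ((hd1 z hz).fun_pow 3) (pow_ne_zero 3 hz0))))))
  rw [H3.wd_eq] at E3
  -- The Schwarzian is holomorphic, so it contributes to `∂h̃` but not to `∂̄h̃`.
  have Hh := ((hpull h hh z hz).mul (.of_hasDerivAt ((hd1 z hz).fun_pow 2))).add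
    (.of_hasDerivAt (((hd3 z hz).fun_div (hd1 z hz) hz0).fun_sub
      ((((hd2 z hz).fun_div (hd1 z hz) hz0).fun_pow 2).const_mul (3 / 2))))
  simp only [schwarzD, hp, hp1, hp2, Dop]
  rw [Hh.wd_eq, Hh.wdbar_eq, E3, E1 hz]
  simp only [Nat.reduceSub, pow_one]
  field_simp
  push_cast
  ring
end

section
/- Let U ⊆ ℂ be open, I ⊆ ℝ an open interval, and f : I × U → ℂ a smooth family of functions such that for each t ∈ I the Wirtinger derivative ∂f_t is nowhere vanishing on U. Set μ_t = ∂̄f_t/∂f_t and v_t = (∂_t f_t)/∂f_t. Then the variation of the Beltrami coefficient is given by ∂_t μ_t = ∂̄v_t − μ_t·∂v_t + (∂μ_t)·v_t, i.e. ∂_t μ_t = ∂̄_{μ_t}^{(−1)} v_t. -/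
/-!
Write `F (t, z) = f t z`, and let `A = ∂̄f_t`, `B = ∂f_t`, `c = ∂_t f_t`. All three are values of the
derivative `DF` on fixed vectors, so their first derivatives are values of the second derivative
`D²F` at `(t, z)`. Its symmetry (`ContDiffAt.isSymmSndFDerivAt`) gives `∂̄c = ∂_t A`, `∂c = ∂_t B`
and `∂̄B = ∂A`. With the quotient rule for the Wirtinger derivatives (`wd_div`, `wdbar_div`), the
claim becomes the identity
`(A_t B - A B_t)/B² = (c_z̄ B - c B_z̄)/B² - (A/B) (c_z B - c B_z)/B² + (c/B) (A_z B - A B_z)/B²`,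
in which the terms without a `t`-derivative cancel.
-/

open Complex MeasureTheory

lemma fderiv_div_apply {a b : ℂ → ℂ} {z : ℂ} (ha : DifferentiableAt ℝ a z)
    (hb : DifferentiableAt ℝ b z) (h0 : b z ≠ 0) (h : ℂ) :
    fderiv ℝ (fun w => a w / b w) z h
      = (fderiv ℝ a z h * b z - a z * fderiv ℝ b z h) / b z ^ 2 := by
  -- Reduce to one real variable by restricting to the line through `z` in direction `h`.
  have line : ∀ {u : ℂ → ℂ}, DifferentiableAt ℝ u z →
      HasDerivAt (fun s : ℝ => u (z + s • h)) (fderiv ℝ u z h) 0 := fun hu =>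
    hu.hasFDerivAt.hasLineDerivAt h
  have h1 := (line ha).div (line hb) (by simpa using h0)
  have hinv : DifferentiableAt ℝ (fun w => (b w)⁻¹) z :=
    ((differentiableAt_inv h0).restrictScalars ℝ (𝕜' := ℂ)).comp z hb
  have hq : DifferentiableAt ℝ (fun w => a w / b w) z := by
    simpa only [div_eq_mul_inv] using ha.fun_mul hinv
  have h2 := line hq
  simpa using h2.unique h1

lemma wd_div {a b : ℂ → ℂ} {z : ℂ} (ha : DifferentiableAt ℝ a z)
    (hb : DifferentiableAt ℝ b z) (h0 : b z ≠ 0) :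
    wd (fun w => a w / b w) z = (wd a z * b z - a z * wd b z) / b z ^ 2 := by
  simp only [wd, fderiv_div_apply ha hb h0]
  ring

lemma wdbar_div {a b : ℂ → ℂ} {z : ℂ} (ha : DifferentiableAt ℝ a z)
    (hb : DifferentiableAt ℝ b z) (h0 : b z ≠ 0) :
    wdbar (fun w => a w / b w) z = (wdbar a z * b z - a z * wdbar b z) / b z ^ 2 := by
  simp only [wdbar, fderiv_div_apply ha hb h0]
  ring

/-- for a smooth family `f t` with `∂f_t ≠ 0`, setting
`μ_t = ∂̄f_t/∂f_t` and `v_t = ∂_t f_t/∂f_t`, one has `∂_t μ_t = ∂̄_{μ_t}^{(−1)} v_t`. -/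
theorem stmt9 (U : Set ℂ) (hU : IsOpen U) (I : Set ℝ)
    (hI : ∃ a b : ℝ, I = Set.Ioo a b)
    (f : ℝ → ℂ → ℂ)
    (hf : ContDiffOn ℝ (⊤ : ℕ∞) (fun p : ℝ × ℂ => f p.1 p.2) (I ×ˢ U))
    (hf' : ∀ t ∈ I, ∀ z ∈ U, wd (f t) z ≠ 0) :
    ∀ t ∈ I, ∀ z ∈ U,
      deriv (fun s => wdbar (f s) z / wd (f s) z) t
        = dbarMu (fun w => wdbar (f t) w / wd (f t) w) (-1)
            (fun w => deriv (fun s => f s w) t / wd (f t) w) z := by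
  intro t ht z hz
  obtain ⟨a, b, rfl⟩ := hI
  set F : ℝ × ℂ → ℂ := fun p => f p.1 p.2 with hF
  have hW : IsOpen (Set.Ioo a b ×ˢ U) := isOpen_Ioo.prod hU
  have hsm : ∀ s ∈ Set.Ioo a b, ∀ w ∈ U, ContDiffAt ℝ (⊤ : ℕ∞) F (s, w) := fun s hs w hw =>
    hf.contDiffAt (hW.mem_nhds ⟨hs, hw⟩)
  have hdiff : ∀ s ∈ Set.Ioo a b, ∀ w ∈ U, HasFDerivAt F (fderiv ℝ F (s, w)) (s, w) :=
    fun s hs w hw => ((hsm s hs w hw).differentiableAt (by simp)).hasFDerivAt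
  have hspace : ∀ s ∈ Set.Ioo a b, ∀ w ∈ U, ∀ h : ℂ,
      fderiv ℝ (f s) w h = fderiv ℝ F (s, w) (0, h) := by
    intro s hs w hw h
    have h1 : HasFDerivAt (f s) _ w := (hdiff s hs w hw).comp w (hasFDerivAt_prodMk_right s w)
    rw [h1.fderiv]
    simp
  have hline : ∀ w : ℂ, HasDerivAt (fun s : ℝ => (s, w)) ((1 : ℝ), (0 : ℂ)) t := fun w =>
    (hasDerivAt_id t).prodMk (hasDerivAt_const t w)
  have htime : ∀ w ∈ U, deriv (fun s => f s w) t = fderiv ℝ F (t, w) (1, 0) := by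
    intro w hw
    exact ((hdiff t ht w hw).comp_hasDerivAt t (hline w)).deriv
  -- `H` is the second derivative of `F` at `(t, z)`.
  set H := fderiv ℝ (fderiv ℝ F) (t, z) with hH
  have hG : HasFDerivAt (fderiv ℝ F) H (t, z) :=
    (((hsm t ht z hz).fderiv_right (m := 1) (by norm_cast)).differentiableAt
      (by simp)).hasFDerivAt
  have hsymm : ∀ x y, H x y = H y x := fun x y =>
    ((hsm t ht z hz).isSymmSndFDerivAt (by simp; norm_cast)).eq x y
  have hGv : ∀ v, HasFDerivAt (fun p => fderiv ℝ F p v) (H.flip v) (t, z) := fun v => by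
    simpa using hG.clm_apply (hasFDerivAt_const v (t, z))
  have hGz : ∀ v, HasFDerivAt (fun w => fderiv ℝ F (t, w) v)
      ((H.flip v).comp (ContinuousLinearMap.inr ℝ ℝ ℂ)) z := fun v =>
    (hGv v).comp z (hasFDerivAt_prodMk_right t z)
  have hGt : ∀ v, HasDerivAt (fun s => fderiv ℝ F (s, z) v) (H (1, 0) v) t := fun v => by
    have h1 := (hGv v).comp_hasDerivAt t (hline z)
    exact h1
  have hUz : ∀ᶠ w in nhds z, w ∈ U := hU.mem_nhds hz
  have hIt : ∀ᶠ s in nhds t, s ∈ Set.Ioo a b := isOpen_Ioo.mem_nhds ht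
  have hfz : ∀ h, HasFDerivAt (fun w => fderiv ℝ (f t) w h)
      ((H.flip (0, h)).comp (ContinuousLinearMap.inr ℝ ℝ ℂ)) z := fun h =>
    (hGz (0, h)).congr_of_eventuallyEq (hUz.mono fun w hw => hspace t ht w hw h)
  have hft : ∀ h, HasDerivAt (fun s => fderiv ℝ (f s) z h) (H (1, 0) (0, h)) t := fun h =>
    (hGt (0, h)).congr_of_eventuallyEq (hIt.mono fun s hs => hspace s hs z hz h)
  have hc : HasFDerivAt (fun w => deriv (fun s => f s w) t)
      ((H.flip (1, 0)).comp (ContinuousLinearMap.inr ℝ ℝ ℂ)) z :=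
    (hGz (1, 0)).congr_of_eventuallyEq (hUz.mono htime)
  have hBz : HasFDerivAt (wd (f t)) _ z :=
    ((hfz 1).sub ((hfz Complex.I).const_mul Complex.I)).mul_const (2 : ℂ)⁻¹
  have hAz : HasFDerivAt (wdbar (f t)) _ z :=
    ((hfz 1).add ((hfz Complex.I).const_mul Complex.I)).mul_const (2 : ℂ)⁻¹
  have hBt : HasDerivAt (fun s => wd (f s) z) _ t :=
    ((hft 1).sub ((hft Complex.I).const_mul Complex.I)).div_const 2
  have hAt : HasDerivAt (fun s => wdbar (f s) z) _ t :=
    ((hft 1).add ((hft Complex.I).const_mul Complex.I)).div_const 2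
  have h0 := hf' t ht z hz
  have hBA : wdbar (wd (f t)) z = wd (wdbar (f t)) z := by
    rw [wdbar, wd, hBz.fderiv, hAz.fderiv]
    simp [hsymm (0, Complex.I) (0, 1)]
    ring
  rw [(hAt.fun_div hBt h0).deriv, dbarMu, wdbar_div hc.differentiableAt hBz.differentiableAt h0,
    wd_div hc.differentiableAt hBz.differentiableAt h0,
    wd_div hAz.differentiableAt hBz.differentiableAt h0, hBA]
  have hcz : wd (fun w => deriv (fun s => f s w) t) z
      = (H (1, 0) (0, 1) - Complex.I * H (1, 0) (0, Complex.I)) / 2 := by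
    rw [wd, hc.fderiv]
    simp [hsymm (1, 0)]
  have hczb : wdbar (fun w => deriv (fun s => f s w) t) z
      = (H (1, 0) (0, 1) + Complex.I * H (1, 0) (0, Complex.I)) / 2 := by
    rw [wdbar, hc.fderiv]
    simp [hsymm (1, 0)]
  rw [hcz, hczb]
  push_cast
  field_simp
  ring
end

section
/- Let U ⊆ ℂ be open, I ⊆ ℝ an open interval, h : U → ℂ smooth, and f : I × U → ℂ a smooth family with ∂f_t nowhere vanishing on U for each t. Set μ_t = ∂̄f_t/∂f_t, v_t = (∂_t f_t)/∂f_t, s_t = (∂_t ∂f_t)/∂f_t, and ω_t = (∂²f_t/∂f_t)·∂μ_t + 2μ_t·h. Define A_t = s_t·(∂²f_t/∂f_t) − 2(h − {f_t,z})·v_t and B_t = s_t·(∂̄∂f_t/∂f_t) + 2(∂²f_t/∂f_t)·(∂_t μ_t) − 2(h − {f_t,z})·v_t·μ_t. Then the variation of the Polyakov density satisfies ∂_t ω_t = −2·(∂̄h − D_h μ_t)·v_t + (∂B_t − ∂̄A_t) on U; i.e., the variation of the bulk 2-form equals the source term a = −2(∂̄h − D_h μ)·(∂_t f/∂f) dz∧dz̄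 plus the exterior derivative of the 1-form η = δ(log ∂f)·d(log ∂f) + 2·∂(log ∂f)·(∂_tμ) dz̄ − 2(h − {f,z})·(∂_t f/∂f)·(dz + μ dz̄), with the convention d(A dz + B dz̄) = (∂B − ∂̄A) dz∧dz̄. -/
/-!
Write `p = ∂f`, `L = ∂p/p`, `M = ∂̄p/p`, `S = ∂L − L²/2` for the Schwarzian, and let a dot be `∂_t`.
Commuting derivatives gives `M = ∂μ + μL`, `∂̄L = ∂M`, `∂_t L = ∂s`, `∂_t M = ∂̄s`, `s = ∂v + vL`,
`μ̇ = ∂̄v + v ∂μ − μ ∂v` and `∂̄S = μ ∂S + 2S ∂μ + ∂³μ`.  Hence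
`∂(sM) − ∂̄(sL) + 2∂(Lμ̇) = ∂s ∂μ + L ∂μ̇ + 2μ̇S = ∂_t ω − 2μ̇(h − S)`, and the remaining terms of
`∂B − ∂̄A` contribute `2μ̇(h − S) + 2v(∂̄h − D_h μ)`.

This computation only uses three commuting derivations of a commutative ring, and is carried out in
that generality (`polyakov_variation`).  It is applied to the ring `SmoothRing Ω` of smooth functions
on `Ω = I × U`, with the derivations `∂`, `∂̄`, `∂_t` built from directional derivatives.  The
predicate `RepBy` links a family `g t z` to the element of the ring with the same values, and is
stable under the operations in the statement.
-/

open Complex MeasureTheory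

section

open scoped ContDiff

/-! ### The identity for commuting derivations -/

section Algebra

variable {R : Type*} [CommRing R] [Algebra ℂ R]

/-- Commuting derivations also commute on `log p`: `D₁ (D₂ p / p) = D₂ (D₁ p / p)`, `r` being `1/p`. -/
lemma logDeriv_comm (D₁ D₂ : Derivation ℂ R R) (h12 : ∀ x, D₁ (D₂ x) = D₂ (D₁ x))
    (p r : R) (hr : r * p = 1) : D₁ (D₂ p * r) = D₂ (D₁ p * r) := by
  have e : ∀ D : Derivation ℂ R R, D r = -(r ^ 2 * D p) := by
    intro D
    have h1 := congrArg D hr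
    simp only [Derivation.leibniz, smul_eq_mul, Derivation.map_one_eq_zero] at h1
    linear_combination r * h1 - D r * hr
  simp only [Derivation.leibniz, smul_eq_mul, e, h12]
  ring

/-- The variation formula in a commutative ring with commuting derivations `P`, `Q`, `T` in the roles
of `∂`, `∂̄`, `∂_t`.  Here `r` is `1/∂f` and `K` is `2(h − {f,z})`, which avoids halves. -/
lemma polyakov_variation (P Q T : Derivation ℂ R R) (hPQ : ∀ x, P (Q x) = Q (P x))
    (hTP : ∀ x, T (P x) = P (T x)) (hTQ : ∀ x, T (Q x) = Q (T x))
    (F h r μ v s L M K : R) (hr : r * P F = 1) (hTh : T h = 0)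
    (hμ : μ = Q F * r) (hv : v = T F * r) (hs : s = T (P F) * r)
    (hL : L = P (P F) * r) (hM : M = Q (P F) * r)
    (hK : K = 2 * h - (2 * (P (P (P F)) * r) - 3 * L ^ 2)) :
    T (L * P μ + 2 * μ * h) =
      -2 * (Q h - (P (P (P μ)) + 2 * h * P μ + P h * μ)) * v
        + (P (s * M + 2 * L * T μ - K * v * μ) - Q (s * L - K * v)) := by
  have two : ∀ D : Derivation ℂ R R, D 2 = 0 := fun D => by
    simpa using D.map_natCast 2
  have three : ∀ D : Derivation ℂ R R, D 3 = 0 := fun D => by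
    simpa using D.map_natCast 3
  have hq : Q F = μ * P F := by linear_combination (-Q F) * hr - P F * hμ
  have hw : T F = v * P F := by linear_combination (-T F) * hr - P F * hv
  have hLp : P (P F) = L * P F := by linear_combination (-P (P F)) * hr - P F * hL
  have hM' : M = P μ + μ * L := by
    have h1 : Q (P F) = μ * P (P F) + P F * P μ := by
      rw [← hPQ, hq]; simp only [Derivation.leibniz, smul_eq_mul]
    rw [hM, h1, hL]; linear_combination P μ * hr
  have hs' : s = P v + v * L := by
    have h1 : T (P F) = v * P (P F) + P F * P v := by
      rw [hTP, hw]; simp only [Derivation.leibniz, smul_eq_mul]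
    rw [hs, h1, hL]; linear_combination P v * hr
  have hQL : Q L = P M := by
    rw [hL, hM]; exact (logDeriv_comm P Q hPQ _ _ hr).symm
  have hTL : T L = P s := by rw [hL, hs]; exact logDeriv_comm T P hTP _ _ hr
  have hTM : T M = Q s := by rw [hM, hs]; exact logDeriv_comm T Q hTQ _ _ hr
  have hTμ : T μ = Q v + v * P μ - μ * P v := by
    have h1 : T (Q F) = Q (T F) := hTQ F
    have h2 : T (P F) = s * P F := by linear_combination (-T (P F)) * hr - P F * hs
    have h3 : Q (P F) = M * P F := by linear_combination (-Q (P F)) * hr - P F * hM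
    rw [hq, hw] at h1
    simp only [Derivation.leibniz, smul_eq_mul, h2, h3] at h1
    rw [hM', hs'] at h1
    linear_combination r * h1 - (T μ - Q v - v * P μ + μ * P v) * hr
  have hK' : K = 2 * h - 2 * P L + L ^ 2 := by
    have h1 : P (P (P F)) = L * P (P F) + P F * P L := by
      rw [hLp]; simp only [Derivation.leibniz, smul_eq_mul]; rw [hLp]
    rw [hK, h1, hLp]
    linear_combination (-2 * L ^ 2 - 2 * P L) * hr
  have hQs : Q s = P (T μ) + T μ * L + μ * P s := by
    rw [← hTM, hM']
    simp only [map_add, Derivation.leibniz, smul_eq_mul, hTP, hTL]; ring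
  have hPM : P M = P (P μ) + μ * P L + L * P μ := by
    rw [hM']; simp only [map_add, Derivation.leibniz, smul_eq_mul]; ring
  have hQPL : Q (P L) = P (P (P μ)) + μ * P (P L) + P L * P μ + L * P (P μ) + P μ * P L := by
    rw [← hPQ, hQL, hPM]; simp only [map_add, Derivation.leibniz, smul_eq_mul]; ring
  have hPK : P K = 2 * P h - 2 * P (P L) + 2 * L * P L := by
    rw [hK']; simp only [map_add, map_sub, Derivation.leibniz, smul_eq_mul, pow_two, two]; ring
  have hQK : Q K = 2 * Q h - 2 * Q (P L) + 2 * L * P M := by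
    rw [hK']; simp only [map_add, map_sub, Derivation.leibniz, smul_eq_mul, pow_two, two, hQL]
    ring
  simp only [map_add, map_sub, Derivation.leibniz, smul_eq_mul, two, hTh, hTP, hTL, hQs, hQL,
    hPK, hQK, hQPL, hPM]
  rw [hM', hK']
  linear_combination (2 * h - 2 * P L + L ^ 2) * hTμ

end Algebra

/-! ### The ring of smooth functions on an open set -/

/-- The algebra of complex functions on `Ω ⊆ ℝ × ℂ` that are restrictions of functions smooth
on `Ω`. -/
def SmoothRing (Ω : Set (ℝ × ℂ)) : Subalgebra ℂ (Ω → ℂ) where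
  carrier := {g | ∃ G : ℝ × ℂ → ℂ, ContDiffOn ℝ ∞ G Ω ∧ ∀ x : Ω, g x = G x}
  mul_mem' := by
    rintro a b ⟨A, hA, hA'⟩ ⟨B, hB, hB'⟩
    exact ⟨fun x => A x * B x, hA.mul hB, fun x => by simp [hA', hB']⟩
  add_mem' := by
    rintro a b ⟨A, hA, hA'⟩ ⟨B, hB, hB'⟩
    exact ⟨fun x => A x + B x, hA.add hB, fun x => by simp [hA', hB']⟩
  algebraMap_mem' := fun c => ⟨fun _ => c, contDiffOn_const, fun _ => rfl⟩

namespace SmoothRing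

variable {Ω : Set (ℝ × ℂ)}

/-- A chosen extension of an element of `SmoothRing Ω` to the whole of `ℝ × ℂ`; only its values
on `Ω` are meaningful. -/
noncomputable def ext (g : SmoothRing Ω) : ℝ × ℂ → ℂ := g.2.choose

lemma ext_smooth (g : SmoothRing Ω) : ContDiffOn ℝ ∞ (ext g) Ω := g.2.choose_spec.1

lemma ext_apply (g : SmoothRing Ω) (x : Ω) : ext g x = g.1 x := (g.2.choose_spec.2 x).symm

lemma ext_diff (hΩ : IsOpen Ω) (g : SmoothRing Ω) (x : Ω) : DifferentiableAt ℝ (ext g) x :=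
  ((ext_smooth g).contDiffAt (hΩ.mem_nhds x.2)).differentiableAt (by simp)

lemma fderiv_smooth (hΩ : IsOpen Ω) {G : ℝ × ℂ → ℂ} (hG : ContDiffOn ℝ ∞ G Ω) (u : ℝ × ℂ) :
    ContDiffOn ℝ ∞ (fun x => fderiv ℝ G x u) Ω :=
  (hG.fderiv_of_isOpen hΩ (by simp)).clm_apply contDiffOn_const

/-- The directional derivative along the constant vector `u`. -/
noncomputable def dirFun (hΩ : IsOpen Ω) (u : ℝ × ℂ) (g : SmoothRing Ω) : SmoothRing Ω :=
  ⟨fun x => fderiv ℝ (ext g) x u, _, fderiv_smooth hΩ (ext_smooth g) u, fun _ => rfl⟩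

/-- `dirFun` does not depend on the choice of extension. -/
lemma dirFun_apply (hΩ : IsOpen Ω) (u : ℝ × ℂ) (g : SmoothRing Ω) {G : ℝ × ℂ → ℂ}
    (h : ∀ x : Ω, g.1 x = G x) (x : Ω) : (dirFun hΩ u g).1 x = fderiv ℝ G x u := by
  have : ext g =ᶠ[nhds (x : ℝ × ℂ)] G := by
    filter_upwards [hΩ.mem_nhds x.2] with y hy
    exact (ext_apply g ⟨y, hy⟩).trans (h ⟨y, hy⟩)
  change fderiv ℝ (ext g) x u = _
  rw [this.fderiv_eq]

/-- The directional derivative as a derivation of `SmoothRing Ω`. -/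
noncomputable def dir (hΩ : IsOpen Ω) (u : ℝ × ℂ) :
    Derivation ℂ (SmoothRing Ω) (SmoothRing Ω) :=
  Derivation.mk'
    { toFun := dirFun hΩ u
      map_add' := fun a b => by
        ext x
        rw [dirFun_apply hΩ u (a + b) (G := fun x => ext a x + ext b x)
          (fun x => by simp [ext_apply]),
          fderiv_fun_add (ext_diff hΩ a x) (ext_diff hΩ b x)]
        rfl
      map_smul' := fun c a => by
        ext x
        rw [dirFun_apply hΩ u (c • a) (G := fun x => c * ext a x)
          (fun x => by simp [ext_apply]),
          fderiv_const_mul (ext_diff hΩ a x)]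
        rfl }
    (fun a b => by
      ext x
      change (dirFun hΩ u (a * b)).1 x = _
      rw [dirFun_apply hΩ u (a * b) (G := fun x => ext a x * ext b x)
          (fun x => by simp [ext_apply]),
          fderiv_fun_mul (ext_diff hΩ a x) (ext_diff hΩ b x), ext_apply, ext_apply]
      rfl)

lemma dir_apply (hΩ : IsOpen Ω) (u : ℝ × ℂ) (g : SmoothRing Ω) {G : ℝ × ℂ → ℂ}
    (h : ∀ x : Ω, g.1 x = G x) (x : Ω) : (dir hΩ u g).1 x = fderiv ℝ G x u :=
  dirFun_apply hΩ u g h x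

lemma dir_comm (hΩ : IsOpen Ω) (u w : ℝ × ℂ) (g : SmoothRing Ω) :
    dir hΩ u (dir hΩ w g) = dir hΩ w (dir hΩ u g) := by
  ext x
  have key : ∀ a b : ℝ × ℂ, (dir hΩ a (dir hΩ b g)).1 x
      = fderiv ℝ (fderiv ℝ (ext g)) x a b := by
    intro a b
    rw [dir_apply hΩ a (dir hΩ b g) (G := fun y => fderiv ℝ (ext g) y b) (fun _ => rfl)]
    have hd : DifferentiableAt ℝ (fderiv ℝ (ext g)) x :=
      (((ext_smooth g).fderiv_of_isOpen hΩ (m := ∞) (by simp)).contDiffAt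
        (hΩ.mem_nhds x.2)).differentiableAt (by simp)
    rw [fderiv_clm_apply hd (differentiableAt_const b)]
    simp
  rw [key, key]
  exact ((ext_smooth g).contDiffAt (hΩ.mem_nhds x.2)).isSymmSndFDerivAt
    (by simpa using WithTop.coe_le_coe.2 (le_top : (2 : ℕ∞) ≤ ⊤)) u w

/-- The derivation `∂` of `SmoothRing Ω`. -/
noncomputable def P (hΩ : IsOpen Ω) : Derivation ℂ (SmoothRing Ω) (SmoothRing Ω) :=
  (1 / 2 : ℂ) • (dir hΩ (0, 1) - Complex.I • dir hΩ (0, Complex.I))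

/-- The derivation `∂̄` of `SmoothRing Ω`. -/
noncomputable def Q (hΩ : IsOpen Ω) : Derivation ℂ (SmoothRing Ω) (SmoothRing Ω) :=
  (1 / 2 : ℂ) • (dir hΩ (0, 1) + Complex.I • dir hΩ (0, Complex.I))

/-- The derivation `∂_t` of `SmoothRing Ω`. -/
noncomputable def T (hΩ : IsOpen Ω) : Derivation ℂ (SmoothRing Ω) (SmoothRing Ω) :=
  dir hΩ (1, 0)

lemma P_Q_comm (hΩ : IsOpen Ω) (x : SmoothRing Ω) : P hΩ (Q hΩ x) = Q hΩ (P hΩ x) := by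
  simp only [P, Q, Derivation.smul_apply, Derivation.add_apply, Derivation.sub_apply, map_add,
    map_sub, Derivation.map_smul, dir_comm hΩ (0, 1) (0, Complex.I) x]
  module

lemma T_P_comm (hΩ : IsOpen Ω) (x : SmoothRing Ω) : T hΩ (P hΩ x) = P hΩ (T hΩ x) := by
  simp only [P, T, Derivation.smul_apply, Derivation.sub_apply,
    map_sub, Derivation.map_smul, dir_comm hΩ (1, 0) _ x]

lemma T_Q_comm (hΩ : IsOpen Ω) (x : SmoothRing Ω) : T hΩ (Q hΩ x) = Q hΩ (T hΩ x) := by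
  simp only [Q, T, Derivation.smul_apply, Derivation.add_apply,
    map_add, Derivation.map_smul, dir_comm hΩ (1, 0) _ x]

end SmoothRing

/-! ### Families of functions as elements of the ring -/

open SmoothRing

section RepBy

variable {I : Set ℝ} {U : Set ℂ}

/-- The family `g` takes the same values on `I × U` as the ring element `G`. -/
def RepBy (g : ℝ → ℂ → ℂ) (G : SmoothRing (I ×ˢ U)) : Prop :=
  ∀ x : (I ×ˢ U : Set (ℝ × ℂ)), g x.1.1 x.1.2 = G.1 x

variable {g k : ℝ → ℂ → ℂ} {G K : SmoothRing (I ×ˢ U)}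

lemma RepBy.add (hg : RepBy g G) (hk : RepBy k K) : RepBy (fun t z => g t z + k t z) (G + K) :=
  fun x => congrArg₂ (· + ·) (hg x) (hk x)

lemma RepBy.sub (hg : RepBy g G) (hk : RepBy k K) : RepBy (fun t z => g t z - k t z) (G - K) :=
  fun x => congrArg₂ (· - ·) (hg x) (hk x)

lemma RepBy.mul (hg : RepBy g G) (hk : RepBy k K) : RepBy (fun t z => g t z * k t z) (G * K) :=
  fun x => congrArg₂ (· * ·) (hg x) (hk x)

lemma RepBy.div (hg : RepBy g G) (hk : RepBy (fun t z => (k t z)⁻¹) K) :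
    RepBy (fun t z => g t z / k t z) (G * K) :=
  fun x => (div_eq_mul_inv _ _).trans (congrArg₂ (· * ·) (hg x) (hk x))

lemma RepBy.two : RepBy (fun _ _ => 2) (2 : SmoothRing (I ×ˢ U)) := fun _ => rfl

lemma RepBy.neg_two : RepBy (fun _ _ => -2) (-2 : SmoothRing (I ×ˢ U)) := fun _ => rfl

lemma RepBy.three : RepBy (fun _ _ => 3) (3 : SmoothRing (I ×ˢ U)) := fun _ => rfl

/-- Spatial derivatives of a slice are derivatives of the ring element in directions `(0, u)`. -/
lemma RepBy.slice_fderiv (hΩ : IsOpen (I ×ˢ U)) (hU : IsOpen U) (hg : RepBy g G)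
    (x : (I ×ˢ U : Set (ℝ × ℂ))) (u : ℂ) :
    fderiv ℝ (g x.1.1) x.1.2 u = (dir hΩ (0, u) G).1 x := by
  obtain ⟨⟨t, z⟩, ht, hz⟩ := x
  rw [dir_apply hΩ _ G (G := ext G) (fun y => (ext_apply G y).symm)]
  have h1 : g t =ᶠ[nhds z] fun w => ext G (t, w) := by
    filter_upwards [hU.mem_nhds hz] with w hw
    exact (hg ⟨(t, w), ht, hw⟩).trans (ext_apply G ⟨(t, w), ht, hw⟩).symm
  have h2 := (ext_diff hΩ G ⟨(t, z), ht, hz⟩).hasFDerivAt.comp z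
    (hasFDerivAt_prodMk_right (𝕜 := ℝ) t z)
  change fderiv ℝ (g t) z u = _
  rw [h1.fderiv_eq]
  exact congrArg (fun l => l u) h2.fderiv

lemma RepBy.wd (hΩ : IsOpen (I ×ˢ U)) (hU : IsOpen U) (hg : RepBy g G) :
    RepBy (fun t => wd (g t)) (P hΩ G) := by
  intro x
  simp only [_root_.wd, hg.slice_fderiv hΩ hU x]
  simp [P]
  ring

lemma RepBy.wdbar (hΩ : IsOpen (I ×ˢ U)) (hU : IsOpen U) (hg : RepBy g G) :
    RepBy (fun t => wdbar (g t)) (Q hΩ G) := by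
  intro x
  simp only [_root_.wdbar, hg.slice_fderiv hΩ hU x]
  simp [Q]
  ring

lemma RepBy.dt (hΩ : IsOpen (I ×ˢ U)) (hI : IsOpen I) (hg : RepBy g G) :
    RepBy (fun t z => deriv (fun r => g r z) t) (T hΩ G) := by
  rintro ⟨⟨t, z⟩, ht, hz⟩
  rw [T, dir_apply hΩ _ G (G := ext G) (fun y => (ext_apply G y).symm)]
  have h1 : (fun r => g r z) =ᶠ[nhds t] fun r => ext G (r, z) := by
    filter_upwards [hI.mem_nhds ht] with r hr
    exact (hg ⟨(r, z), hr, hz⟩).trans (ext_apply G ⟨(r, z), hr, hz⟩).symm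
  have h2 := (ext_diff hΩ G ⟨(t, z), ht, hz⟩).hasFDerivAt.comp t
    (hasFDerivAt_prodMk_left (𝕜 := ℝ) t z)
  change deriv (fun r => g r z) t = _
  rw [h1.deriv_eq]
  exact h2.hasDerivAt.deriv

end RepBy

end

open SmoothRing in
/-- variation of the Polyakov bulk density: for a smooth family `f t`
with `∂f_t ≠ 0` one has
`∂_t ω_t = −2·(∂̄h − D_h μ_t)·v_t + (∂B_t − ∂̄A_t)` on `U`. -/
theorem stmt14 (U : Set ℂ) (hU : IsOpen U) (I : Set ℝ)
    (hI : ∃ a b : ℝ, I = Set.Ioo a b)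
    (h : ℂ → ℂ) (hh : ContDiffOn ℝ (⊤ : ℕ∞) h U)
    (f : ℝ → ℂ → ℂ)
    (hf : ContDiffOn ℝ (⊤ : ℕ∞) (fun p : ℝ × ℂ => f p.1 p.2) (I ×ˢ U))
    (hf' : ∀ t ∈ I, ∀ z ∈ U, wd (f t) z ≠ 0)
    -- the Beltrami coefficient μ_t, the variation field v_t,
    -- and the auxiliary field s_t = ∂_t(∂f_t)/∂f_t
    (μ v s : ℝ → ℂ → ℂ)
    (hμ : μ = fun t z => wdbar (f t) z / wd (f t) z)
    (hv : v = fun t z => deriv (fun r => f r z) t / wd (f t) z)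
    (hs : s = fun t z => deriv (fun r => wd (f r) z) t / wd (f t) z)
    -- the Polyakov density ω_t
    (ω : ℝ → ℂ → ℂ)
    (hω : ω = fun t z => (wd (wd (f t)) z / wd (f t) z) * wd (μ t) z
                           + 2 * μ t z * h z)
    -- the components of the 1-form η_t = A_t dz + B_t dz̄
    (A B : ℝ → ℂ → ℂ)
    (hA : A = fun t z => s t z * (wd (wd (f t)) z / wd (f t) z)
                           - 2 * (h z - schwarz (f t) z) * v t z)
    (hB : B = fun t z => s t z * (wdbar (wd (f t)) z / wd (f t) z)
                           + 2 * (wd (wd (f t)) z / wd (f t) z)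
                               * deriv (fun r => μ r z) t
                           - 2 * (h z - schwarz (f t) z) * v t z * μ t z) :
    ∀ t ∈ I, ∀ z ∈ U,
      deriv (fun r => ω r z) t
        = -2 * (wdbar h z - Dop h (μ t) z) * v t z
            + (wd (B t) z - wdbar (A t) z) := by
  obtain ⟨a, b, rfl⟩ := hI
  have hI : IsOpen (Set.Ioo a b) := isOpen_Ioo
  have hΩ : IsOpen (Set.Ioo a b ×ˢ U) := hI.prod hU
  obtain ⟨F, hF⟩ : ∃ F : SmoothRing (Set.Ioo a b ×ˢ U), RepBy f F :=
    ⟨⟨fun x => f x.1.1 x.1.2, _, hf, fun _ => rfl⟩, fun _ => rfl⟩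
  obtain ⟨H, hH⟩ : ∃ H : SmoothRing (Set.Ioo a b ×ˢ U), RepBy (fun _ z => h z) H :=
    ⟨⟨fun x => h x.1.2, fun x => h x.2, hh.comp contDiffOn_snd (fun x hx => hx.2),
      fun _ => rfl⟩, fun _ => rfl⟩
  have hp := hF.wd hΩ hU
  obtain ⟨r, hr⟩ : ∃ r : SmoothRing (Set.Ioo a b ×ˢ U), RepBy (fun t z => (wd (f t) z)⁻¹) r := by
    refine ⟨⟨fun x => (wd (f x.1.1) x.1.2)⁻¹, fun x => (ext (P hΩ F) x)⁻¹, ?_, ?_⟩, fun _ => rfl⟩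
    · refine (ext_smooth _).inv fun x hx => ?_
      rw [ext_apply _ ⟨x, hx⟩, ← hp ⟨x, hx⟩]
      exact hf' _ hx.1 _ hx.2
    · intro x
      exact congrArg Inv.inv ((hp x).trans (ext_apply _ x).symm)
  have hrp : r * P hΩ F = 1 := by
    ext x
    change r.1 x * (P hΩ F).1 x = 1
    rw [← hr x, ← hp x]
    exact inv_mul_cancel₀ (hf' _ x.2.1 _ x.2.2)
  have hTH : T hΩ H = 0 := by
    ext x
    rw [← hH.dt hΩ hI x]
    simp
  have rμ : RepBy μ (Q hΩ F * r) := hμ ▸ (hF.wdbar hΩ hU).div hr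
  have rv : RepBy v (T hΩ F * r) := hv ▸ (hF.dt hΩ hI).div hr
  have rs : RepBy s (T hΩ (P hΩ F) * r) := hs ▸ (hp.dt hΩ hI).div hr
  have rL := (hp.wd hΩ hU).div hr
  have rM := (hp.wdbar hΩ hU).div hr
  -- `2 * (h - {f,z})` with the halves cleared
  have rK : RepBy (fun t z => 2 * (h z - schwarz (f t) z))
      (2 * H - (2 * (P hΩ (P hΩ (P hΩ F)) * r) - 3 * (P hΩ (P hΩ F) * r) ^ 2)) := by
    rw [pow_two]
    have h1 := (RepBy.two.mul hH).sub ((RepBy.two.mul (((hp.wd hΩ hU).wd hΩ hU).div hr)).sub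
      (RepBy.three.mul (rL.mul rL)))
    refine fun x => Eq.trans ?_ (h1 x)
    simp only [schwarz]
    ring
  have rω := (rL.mul (rμ.wd hΩ hU)).add ((RepBy.two.mul rμ).mul hH)
  have rA := (rs.mul rL).sub (rK.mul rv)
  have rB := ((rs.mul rM).add ((RepBy.two.mul rL).mul (rμ.dt hΩ hI))).sub ((rK.mul rv).mul rμ)
  intro t ht z hz
  have key := polyakov_variation (P hΩ) (Q hΩ) (T hΩ) (P_Q_comm hΩ) (T_P_comm hΩ) (T_Q_comm hΩ)
    F H r _ _ _ _ _ _ hrp hTH rfl rfl rfl rfl rfl rfl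
  have rD : RepBy (fun t => Dop h (μ t)) _ := ((((rμ.wd hΩ hU).wd hΩ hU).wd hΩ hU).add
    ((RepBy.two.mul hH).mul (rμ.wd hΩ hU))).add ((hH.wd hΩ hU).mul rμ)
  have rRHS := ((RepBy.neg_two.mul ((hH.wdbar hΩ hU).sub rD)).mul rv).add
    ((rB.wd hΩ hU).sub (rA.wdbar hΩ hU))
  rw [hω, hA, hB]
  let x : (Set.Ioo a b ×ˢ U : Set (ℝ × ℂ)) := ⟨(t, z), ht, hz⟩
  exact (rω.dt hΩ hI x).trans
    ((congrArg (fun y : SmoothRing (Set.Ioo a b ×ˢ U) => y.1 x) key).trans (rRHS x).symm)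
end

section
/- Let U ⊆ ℂ be open and let μ, h, h' : U → ℂ be smooth projective connection and Beltrami data satisfying both Euler–Lagrange equations D_h μ = ∂̄h and D_{h'} μ = ∂̄h' on U. Then ∂̄_μ^{(2)}(h − h') = 0 on U, i.e. ∂̄(h−h') − μ·∂(h−h') − 2·(∂μ)·(h−h') = 0; the difference of two critical projective connections is a quadratic differential holomorphic for the complex structure determined by μ. -/
open Complex MeasureTheory

/-- if `D_h μ = ∂̄h` and `D_{h'} μ = ∂̄h'` on `U`, then
`∂̄_μ^{(2)}(h − h') = 0` on `U`: the difference of two critical projective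
connections is a μ-holomorphic quadratic differential. -/
theorem stmt15 (U : Set ℂ) (hU : IsOpen U) (μ h h' : ℂ → ℂ)
    (hμ : ContDiffOn ℝ (⊤ : ℕ∞) μ U) (hh : ContDiffOn ℝ (⊤ : ℕ∞) h U) (hh' : ContDiffOn ℝ (⊤ : ℕ∞) h' U)
    (hEL : ∀ z ∈ U, Dop h μ z = wdbar h z)
    (hEL' : ∀ z ∈ U, Dop h' μ z = wdbar h' z) :
    ∀ z ∈ U, dbarMu μ 2 (fun w => h w - h' w) z = 0 := by
  intro z hz
  have hd : DifferentiableAt ℝ h z :=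
    (hh.contDiffAt (hU.mem_nhds hz)).differentiableAt (by simp)
  have hd' : DifferentiableAt ℝ h' z :=
    (hh'.contDiffAt (hU.mem_nhds hz)).differentiableAt (by simp)
  have hsub : fderiv ℝ (fun w => h w - h' w) z = fderiv ℝ h z - fderiv ℝ h' z :=
    fderiv_fun_sub hd hd'
  have e := hEL z hz
  have e' := hEL' z hz
  simp only [Dop, dbarMu, wdbar] at e e' ⊢
  have hw : wd (fun w => h w - h' w) z = wd h z - wd h' z := by
    simp only [wd, hsub, sub_apply]
    ring
  rw [hw, hsub]
  simp only [sub_apply]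
  push_cast
  -- The third-order term `∂³μ` is common to both equations and cancels in their difference.
  linear_combination e' - e
end
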